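/- Let Σ = Σ⁽¹⁾ ⊗ Σ⁽²⁾ be the Kronecker product of two positive definite 2×2 matrices Σ⁽¹⁾ and Σ⁽²⁾, and let f(x₁,x₂,x₃,x₄) = x₁x₄ − x₂x₃. Then W_{f,Σ} has the same distribution as (1/4)·R²·U², where R² ~ χ²₄ and U ~ Uniform[0,1] are independent. -/

import Mathlib

open MeasureTheory ProbabilityTheory Matrix MvPolynomial Real

noncomputable section

/-- The distribution of a vector of independent standard normal random variables. -/
def stdGaussian (ι : Type*) [Fintype ι] : Measure (ι → ℝ) :=
  Measure.pi fun _ => gaussianReal 0 1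

/-- `μ` is the distribution of a centered Gaussian random vector with covariance matrix `S`,
i.e. `μ` is the law of `A Z` for a vector `Z` of i.i.d. standard normals with `A Aᵀ = S`. -/
def IsCenteredGaussian {ι : Type*} [Fintype ι] (μ : Measure (ι → ℝ))
    (S : Matrix ι ι ℝ) : Prop :=
  ∃ A : Matrix ι ι ℝ, A * Aᵀ = S ∧ μ = (stdGaussian ι).map A.mulVec

/-- The gradient of a polynomial. -/
def polyGrad {ι : Type*} [Fintype ι] (f : MvPolynomial ι ℝ) (x : ι → ℝ) : ι → ℝ :=
  fun i => eval x (pderiv i f)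

/-- The Wald ratio `W_{f,S}(x) = f(x)² / (∇f(x)ᵀ S ∇f(x))`. -/
def waldRV {ι : Type*} [Fintype ι] (f : MvPolynomial ι ℝ) (S : Matrix ι ι ℝ)
    (x : ι → ℝ) : ℝ :=
  (eval x f) ^ 2 / (polyGrad f x ⬝ᵥ S.mulVec (polyGrad f x))

/-- The chi-square distribution with `k` degrees of freedom. -/
def chiSq (k : ℕ) : Measure ℝ :=
  (stdGaussian (Fin k)).map fun z => ∑ i, (z i) ^ 2

/-!
The tetrad is the determinant `det X` of the `2 × 2` matrix `X` of coordinates. Factoring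
`S₁ = A Aᵀ` and `S₂ = B Bᵀ`, a vector with covariance `S₁ ⊗ S₂` has the law of `A Z Bᵀ` with `Z` a
matrix of i.i.d. standard normals, and `det (A Z Bᵀ) = det A · det B · det Z`. The Wald ratio is
equivariant under linear substitutions and invariant under scaling of the polynomial, so it may be
computed at `Z` with identity covariance. Rotating coordinates replaces `det` by `(|y|² - |z|²) / 2`
with `y` and `z` independent standard normal vectors in the plane, whose Wald ratio is
`(|y|² - |z|²)² / (4 (|y|² + |z|²))`. As `|y|²` and `|z|²` are independent gamma variables, the sum
`s = |y|² + |z|² ∼ χ²₄` is independent of the fraction `t = |y|² / s`, which is `Beta(1, 1)`, i.e.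
uniform. The ratio equals `s (2 t - 1)² / 4`, and `|2 t - 1|` is again uniform.
-/

section LinearSubstitution

lemma pderiv_bind₁ {σ τ R : Type*} [CommSemiring R] [Fintype σ] (g : σ → MvPolynomial τ R)
    (f : MvPolynomial σ R) (j : τ) :
    pderiv j (bind₁ g f) = ∑ i, bind₁ g (pderiv i f) * pderiv j (g i) := by
  classical
  induction f using MvPolynomial.induction_on with
  | C a => simp
  | add p q hp hq => simp [hp, hq, add_mul, Finset.sum_add_distrib]
  | mul_X p k hp =>
    simp [pderiv_X, hp, Pi.single_apply, add_mul, Finset.sum_add_distrib, Finset.mul_sum, mul_assoc,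
      apply_ite]

lemma pderiv_toMvPolynomial {m n R : Type*} [CommSemiring R] [Fintype n]
    (A : Matrix m n R) (i : m) (j : n) : pderiv j (A.toMvPolynomial i) = C (A i j) := by
  classical
  simp [Matrix.toMvPolynomial, ← C_mul_X_eq_monomial, pderiv_X, Pi.single_apply]

lemma eval_bind₁_toMvPolynomial {m n R : Type*} [CommSemiring R] [Fintype n]
    (A : Matrix m n R) (f : MvPolynomial m R) (x : n → R) :
    eval x (bind₁ A.toMvPolynomial f) = eval (A *ᵥ x) f := by
  rw [← coe_aeval_eq_eval, ← coe_aeval_eq_eval, RingHom.coe_coe, RingHom.coe_coe, aeval_bind₁]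
  congr 2 with i
  exact toMvPolynomial_eval_eq_apply A i x

variable {ι κ : Type*} [Fintype ι] [Fintype κ]

lemma polyGrad_bind₁_toMvPolynomial (A : Matrix ι κ ℝ) (f : MvPolynomial ι ℝ) (x : κ → ℝ) :
    polyGrad (bind₁ A.toMvPolynomial f) x = polyGrad f (A *ᵥ x) ᵥ* A := by
  classical
  ext j
  simp [polyGrad, pderiv_bind₁, pderiv_toMvPolynomial, eval_bind₁_toMvPolynomial, vecMul,
    dotProduct]

lemma waldRV_bind₁_toMvPolynomial (A : Matrix ι κ ℝ) (f : MvPolynomial ι ℝ) (S : Matrix κ κ ℝ)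
    (x : κ → ℝ) :
    waldRV (bind₁ A.toMvPolynomial f) S x = waldRV f (A * S * Aᵀ) (A *ᵥ x) := by
  simp only [waldRV, eval_bind₁_toMvPolynomial, polyGrad_bind₁_toMvPolynomial]
  rw [← mulVec_transpose A, mulVec_mulVec, dotProduct_comm, dotProduct_mulVec, vecMul_transpose,
    mulVec_mulVec, dotProduct_comm, Matrix.mul_assoc]

lemma waldRV_C_mul {c : ℝ} (hc : c ≠ 0) (f : MvPolynomial ι ℝ) (S : Matrix ι ι ℝ) :
    waldRV (C c * f) S = waldRV f S := by
  ext x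
  have hgrad : polyGrad (C c * f) x = c • polyGrad f x := by
    ext i
    simp [polyGrad]
  simp only [waldRV, hgrad, mulVec_smul, smul_dotProduct, dotProduct_smul, smul_eq_mul, map_mul,
    eval_C, mul_pow]
  rw [← mul_assoc, ← pow_two, mul_div_mul_left _ _ (pow_ne_zero 2 hc)]

lemma continuous_polyGrad (f : MvPolynomial ι ℝ) : Continuous (polyGrad f) :=
  continuous_pi fun _ => MvPolynomial.continuous_eval _

lemma measurable_waldRV (f : MvPolynomial ι ℝ) (S : Matrix ι ι ℝ) : Measurable (waldRV f S) := by
  have hgrad := continuous_polyGrad f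
  have hnum : Continuous fun x => eval x f := MvPolynomial.continuous_eval f
  have hden : Continuous fun x => polyGrad f x ⬝ᵥ S *ᵥ polyGrad f x := by fun_prop
  exact (hnum.measurable.pow_const 2).div hden.measurable

end LinearSubstitution

section Gaussian

variable {ι κ κ' : Type*} [Fintype ι] [Fintype κ] [Fintype κ']

instance : IsProbabilityMeasure (_root_.stdGaussian ι) := by
  unfold _root_.stdGaussian
  infer_instance

@[fun_prop]
lemma measurable_mulVec {ι : Type*} (A : Matrix ι κ ℝ) : Measurable A.mulVec :=
  measurable_pi_lambda _ fun i => by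
    simp only [mulVec, dotProduct]
    fun_prop

lemma charFun_map_mulVec_stdGaussian (A : Matrix ι κ ℝ) (t : EuclideanSpace ℝ ι) :
    charFun ((stdGaussian κ).map fun z => WithLp.toLp 2 (A *ᵥ z)) t =
      Complex.exp (-((t.ofLp ⬝ᵥ (A * Aᵀ) *ᵥ t.ofLp : ℝ) : ℂ) / 2) := by
  have hadj (z : κ → ℝ) :
      inner ℝ (WithLp.toLp 2 (A *ᵥ z)) t = inner ℝ (WithLp.toLp 2 z) (WithLp.toLp 2 (Aᵀ *ᵥ t)) := by
    simp only [EuclideanSpace.inner_eq_star_dotProduct, star_trivial, mulVec_transpose]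
    exact dotProduct_mulVec ..
  have hnorm : ‖WithLp.toLp 2 (Aᵀ *ᵥ t.ofLp)‖ ^ 2 = t.ofLp ⬝ᵥ (A * Aᵀ) *ᵥ t.ofLp := by
    rw [← real_inner_self_eq_norm_sq, EuclideanSpace.inner_eq_star_dotProduct, star_trivial,
      dotProduct_mulVec, vecMul_transpose, mulVec_mulVec, dotProduct_comm]
  rw [← hnorm, Complex.ofReal_pow, ← charFun_stdGaussian, ← map_pi_eq_stdGaussian, charFun_apply,
    charFun_apply, integral_map (by fun_prop) (by fun_prop),
    integral_map (by fun_prop) (by fun_prop)]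
  simp only [hadj]
  rfl

lemma map_mulVec_stdGaussian_congr {ι : Type*} [Finite ι] {A : Matrix ι κ ℝ} {B : Matrix ι κ' ℝ}
    (h : A * Aᵀ = B * Bᵀ) :
    (stdGaussian κ).map A.mulVec = (stdGaussian κ').map B.mulVec := by
  have := Fintype.ofFinite ι
  refine (MeasurableEquiv.toLp 2 (ι → ℝ)).map_measurableEquiv_injective ?_
  rw [Measure.map_map (by fun_prop) (by fun_prop), Measure.map_map (by fun_prop) (by fun_prop)]
  refine Measure.ext_of_charFun (E := EuclideanSpace ℝ ι) (funext fun t => ?_)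
  exact (charFun_map_mulVec_stdGaussian A t).trans
    (h ▸ (charFun_map_mulVec_stdGaussian B t).symm)

lemma isCenteredGaussian_stdGaussian [DecidableEq ι] : IsCenteredGaussian (stdGaussian ι) 1 :=
  ⟨1, by simp, by simp [show (1 : Matrix ι ι ℝ).mulVec = id from funext one_mulVec]⟩

lemma IsCenteredGaussian.map_waldRV [DecidableEq κ] {A : Matrix ι κ ℝ} {μ : Measure (ι → ℝ)}
    (hμ : IsCenteredGaussian μ (A * Aᵀ)) (f : MvPolynomial ι ℝ) :
    μ.map (waldRV f (A * Aᵀ)) = (stdGaussian κ).map (waldRV (bind₁ A.toMvPolynomial f) 1) := by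
  obtain ⟨B, hB, rfl⟩ := hμ
  rw [map_mulVec_stdGaussian_congr hB, Measure.map_map (measurable_waldRV _ _) (by fun_prop)]
  congr 1 with z
  simp [waldRV_bind₁_toMvPolynomial]

end Gaussian

section Determinant

open scoped Kronecker

lemma map_bind₁_kronecker_mvPolynomialX {l m n o R : Type*} [CommSemiring R] [Fintype m]
    [Fintype o] (A : Matrix l m R) (B : Matrix n o R) :
    (mvPolynomialX l n R).map (bind₁ (A ⊗ₖ B).toMvPolynomial) =
      A.map (C (σ := m × o)) * mvPolynomialX m o R * (B.map (C (σ := m × o)))ᵀ := by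
  ext1 i j
  simp only [map_apply, mvPolynomialX_apply, bind₁_X_right, toMvPolynomial, Fintype.sum_prod_type,
    Matrix.mul_apply, transpose_apply, Finset.sum_mul, kroneckerMap_apply, ← C_mul_X_eq_monomial]
  rw [Finset.sum_comm]
  simp only [map_mul, mul_right_comm]

variable {n : Type*} [Fintype n] [DecidableEq n]

lemma bind₁_kronecker_det_mvPolynomialX {R : Type*} [CommRing R] (A B : Matrix n n R) :
    bind₁ (A ⊗ₖ B).toMvPolynomial (mvPolynomialX n n R).det =
      C (A.det * B.det) * (mvPolynomialX n n R).det := by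
  rw [AlgHom.map_det, AlgHom.mapMatrix_apply, map_bind₁_kronecker_mvPolynomialX, det_mul, det_mul,
    det_transpose, map_mul, RingHom.map_det, RingHom.map_det, RingHom.mapMatrix_apply,
    RingHom.mapMatrix_apply, mul_right_comm]

open scoped MatrixOrder in
lemma exists_mul_transpose_eq_of_posDef {S : Matrix n n ℝ} (hS : S.PosDef) :
    ∃ L : Matrix n n ℝ, L * Lᵀ = S ∧ L.det ≠ 0 := by
  obtain ⟨L, hL⟩ := CStarAlgebra.nonneg_iff_eq_star_mul_self.mp hS.posSemidef.nonneg
  refine ⟨Lᵀ, hL.symm, fun h => hS.det_pos.ne' ?_⟩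
  rw [hL, det_mul, ← det_transpose L, h, mul_zero]

lemma IsCenteredGaussian.map_waldRV_det {S₁ S₂ : Matrix n n ℝ} (hS₁ : S₁.PosDef)
    (hS₂ : S₂.PosDef) {μ : Measure (n × n → ℝ)} (hμ : IsCenteredGaussian μ (S₁ ⊗ₖ S₂)) :
    μ.map (waldRV (mvPolynomialX n n ℝ).det (S₁ ⊗ₖ S₂)) =
      (stdGaussian (n × n)).map (waldRV (mvPolynomialX n n ℝ).det 1) := by
  obtain ⟨L₁, rfl, hL₁⟩ := exists_mul_transpose_eq_of_posDef hS₁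
  obtain ⟨L₂, rfl, hL₂⟩ := exists_mul_transpose_eq_of_posDef hS₂
  rw [mul_kronecker_mul, kroneckerMap_transpose] at hμ ⊢
  rw [hμ.map_waldRV, bind₁_kronecker_det_mvPolynomialX, waldRV_C_mul (mul_ne_zero hL₁ hL₂)]

end Determinant

section Rotation

/-- The quadratic form `|y|² - |z|²` in a vector split into two blocks `y = x (0, ·)` and
`z = x (1, ·)`; a rotation turns the `2 × 2` determinant into half of it. -/
def splitForm (κ : Type*) [Fintype κ] : MvPolynomial (Fin 2 × κ) ℝ :=
  ∑ j, X (0, j) ^ 2 - ∑ j, X (1, j) ^ 2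

/-- The orthogonal change of coordinates on `2 × 2` matrices that diagonalizes the determinant.
The rows and columns of the displayed matrix are numbered lexicographically,
`(0, 0), (0, 1), (1, 0), (1, 1)`. -/
def detRotation : Matrix (Fin 2 × Fin 2) (Fin 2 × Fin 2) ℝ :=
  (√2)⁻¹ • (!![1, 0, 1, 0; 0, 1, 0, 1; 0, -1, 0, 1; 1, 0, -1, 0] :
    Matrix (Fin 4) (Fin 4) ℝ).submatrix finProdFinEquiv finProdFinEquiv

lemma inv_sqrt_two_mul_self : (√2)⁻¹ * (√2)⁻¹ = (2 : ℝ)⁻¹ := by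
  rw [← mul_inv, Real.mul_self_sqrt zero_le_two]

lemma detRotation_mul_transpose : detRotation * detRotationᵀ = 1 := by
  have h : (!![1, 0, 1, 0; 0, 1, 0, 1; 0, -1, 0, 1; 1, 0, -1, 0] : Matrix (Fin 4) (Fin 4) ℝ) *
      !![1, 0, 1, 0; 0, 1, 0, 1; 0, -1, 0, 1; 1, 0, -1, 0]ᵀ = (2 : ℝ) • 1 := by
    ext i j
    fin_cases i <;> fin_cases j <;>
      simp [Matrix.mul_apply, Fin.sum_univ_four, Matrix.smul_apply, one_add_one_eq_two]
  rw [detRotation, transpose_smul, smul_mul_smul_comm, inv_sqrt_two_mul_self, transpose_submatrix,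
    submatrix_mul_equiv, h, submatrix_smul, Pi.smul_apply, Pi.smul_apply, submatrix_one_equiv,
    inv_smul_smul₀ two_ne_zero]

lemma bind₁_detRotation_det :
    bind₁ detRotation.toMvPolynomial (mvPolynomialX (Fin 2) (Fin 2) ℝ).det =
      C 2⁻¹ * splitForm (Fin 2) := by
  refine MvPolynomial.funext fun x => ?_
  have hrot : (of fun i j => (detRotation *ᵥ x) (i, j)) = (√2)⁻¹ •
      !![x (0, 0) + x (1, 0), x (0, 1) + x (1, 1); -x (0, 1) + x (1, 1), x (0, 0) - x (1, 0)] := by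
    ext i j
    rw [detRotation, smul_mulVec, of_apply, Pi.smul_apply, Matrix.smul_apply]
    congr 1
    fin_cases i <;> fin_cases j <;>
      simp [mulVec, dotProduct, Fintype.sum_prod_type, finProdFinEquiv, sub_eq_add_neg]
  have hsplit : eval x (splitForm (Fin 2)) =
      x (0, 0) ^ 2 + x (0, 1) ^ 2 - (x (1, 0) ^ 2 + x (1, 1) ^ 2) := by
    simp [splitForm]
  rw [eval_bind₁_toMvPolynomial, eval_det_mvPolynomialX, hrot, det_smul, Fintype.card_fin, pow_two,
    inv_sqrt_two_mul_self, det_fin_two_of, map_mul, eval_C, hsplit]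
  ring

lemma map_waldRV_det_eq_map_waldRV_splitForm :
    (stdGaussian (Fin 2 × Fin 2)).map (waldRV (mvPolynomialX (Fin 2) (Fin 2) ℝ).det 1) =
      (stdGaussian (Fin 2 × Fin 2)).map (waldRV (splitForm (Fin 2)) 1) := by
  have h := isCenteredGaussian_stdGaussian (ι := Fin 2 × Fin 2)
  rw [← detRotation_mul_transpose] at h
  have := h.map_waldRV (mvPolynomialX (Fin 2) (Fin 2) ℝ).det
  rwa [bind₁_detRotation_det, waldRV_C_mul (by norm_num), detRotation_mul_transpose] at this

lemma waldRV_splitForm {κ : Type*} [Fintype κ] [DecidableEq κ] (x : Fin 2 × κ → ℝ) :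
    waldRV (splitForm κ) 1 x =
      (∑ j, x (0, j) ^ 2 - ∑ j, x (1, j) ^ 2) ^ 2 /
        (4 * (∑ j, x (0, j) ^ 2 + ∑ j, x (1, j) ^ 2)) := by
  have hgrad : ∀ i j, polyGrad (splitForm κ) x (i, j) = (-1) ^ (i : ℕ) * (2 * x (i, j)) := by
    intro i j
    fin_cases i <;> simp [polyGrad, splitForm, pderiv_X, Pi.single_apply]
  have hnum : eval x (splitForm κ) = ∑ j, x (0, j) ^ 2 - ∑ j, x (1, j) ^ 2 := by
    simp [splitForm]
  have hden : polyGrad (splitForm κ) x ⬝ᵥ polyGrad (splitForm κ) x =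
      4 * (∑ j, x (0, j) ^ 2 + ∑ j, x (1, j) ^ 2) := by
    simp only [dotProduct, Fintype.sum_prod_type, Fin.sum_univ_two, hgrad, Finset.mul_sum, mul_add]
    congr! 2
    all_goals
      simp only [Fin.val_zero, Fin.val_one]
      ring
  rw [waldRV, one_mulVec, hnum, hden]

end Rotation

section GammaDistribution

open scoped ENNReal

lemma lintegral_lintegral_eq_lintegral_lintegral_mul_one_sub {F : ℝ × ℝ → ℝ≥0∞}
    (hF : Measurable F) :
    ∫⁻ x, ∫⁻ y, F (x, y) = ∫⁻ s, ∫⁻ u, ENNReal.ofReal |s| * F (s * u, s * (1 - u)) := by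
  calc ∫⁻ x, ∫⁻ y, F (x, y) = ∫⁻ x, ∫⁻ s, F (x, s - x) :=
        lintegral_congr fun x => (lintegral_sub_right_eq_self (fun y => F (x, y)) x).symm
    _ = ∫⁻ s, ∫⁻ x, F (x, s - x) := lintegral_lintegral_swap (by fun_prop)
    _ = ∫⁻ s, ∫⁻ u, ENNReal.ofReal |s| * F (s * u, s * (1 - u)) := by
      refine lintegral_congr_ae ?_
      filter_upwards [Measure.ae_ne volume 0] with s hs
      conv_lhs => rw [← Real.smul_map_volume_mul_left hs]
      rw [lintegral_smul_measure, lintegral_map (by fun_prop) (by fun_prop),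
        lintegral_const_mul _ (by fun_prop), smul_eq_mul]
      simp only [mul_sub, mul_one]

lemma gammaPDFReal_mul_gammaPDFReal {a b r : ℝ} (ha : 0 < a) (hb : 0 < b) (hr : 0 < r) {s u : ℝ}
    (hs : 0 < s) (hu₀ : 0 < u) (hu₁ : u < 1) :
    s * (gammaPDFReal a r (s * u) * gammaPDFReal b r (s * (1 - u))) =
      gammaPDFReal (a + b) r s * betaPDFReal a b u := by
  have hv : 0 < 1 - u := sub_pos.mpr hu₁
  have hpow : s ^ (a + b - 1) = s * s ^ (a - 1) * s ^ (b - 1) := by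
    rw [show a + b - 1 = 1 + (a - 1) + (b - 1) by ring, rpow_add hs, rpow_add hs, rpow_one]
  have hexp : rexp (-(r * s)) = rexp (-(r * (s * u))) * rexp (-(r * (s * (1 - u)))) := by
    rw [← exp_add]
    congr 1
    ring
  have := (Gamma_pos_of_pos ha).ne'
  have := (Gamma_pos_of_pos hb).ne'
  have := (Gamma_pos_of_pos (add_pos ha hb)).ne'
  rw [gammaPDFReal, gammaPDFReal, gammaPDFReal, betaPDFReal, beta, if_pos (by positivity),
    if_pos (by positivity), if_pos hs.le, if_pos ⟨hu₀, hu₁⟩, hpow, hexp, mul_rpow hs.le hu₀.le,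
    mul_rpow hs.le hv.le, rpow_add hr]
  field_simp

lemma gammaPDF_mul_gammaPDF {a b r : ℝ} (ha : 0 < a) (hb : 0 < b) (hr : 0 < r) {s u : ℝ}
    (hs : s ≠ 0) (hu₀ : u ≠ 0) (hu₁ : u ≠ 1) :
    ENNReal.ofReal |s| * (gammaPDF a r (s * u) * gammaPDF b r (s * (1 - u))) =
      gammaPDF (a + b) r s * betaPDF a b u := by
  rcases hs.lt_or_gt with hs | hs
  · rw [gammaPDF_of_neg hs, zero_mul]
    rcases hu₀.lt_or_gt with hu | hu
    · rw [gammaPDF_of_neg (mul_neg_of_neg_of_pos hs (by linarith : 0 < 1 - u)), mul_zero, mul_zero]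
    · rw [gammaPDF_of_neg (mul_neg_of_neg_of_pos hs hu), zero_mul, mul_zero]
  · rcases hu₀.lt_or_gt with hu₀ | hu₀
    · rw [gammaPDF_of_neg (mul_neg_of_pos_of_neg hs hu₀), betaPDF_eq_zero_of_nonpos hu₀.le,
        zero_mul, mul_zero, mul_zero]
    rcases hu₁.lt_or_gt with hu₁ | hu₁
    · rw [gammaPDF, gammaPDF, gammaPDF, betaPDF, abs_of_pos hs,
        ← ENNReal.ofReal_mul (gammaPDFReal_nonneg ha hr _), ← ENNReal.ofReal_mul hs.le,
        ← ENNReal.ofReal_mul (gammaPDFReal_nonneg (add_pos ha hb) hr _),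
        gammaPDFReal_mul_gammaPDFReal ha hb hr hs hu₀ hu₁]
    · rw [gammaPDF_of_neg (mul_neg_of_pos_of_neg hs (sub_neg.mpr hu₁)),
        betaPDF_eq_zero_of_one_le hu₁.le, mul_zero, mul_zero, mul_zero]

@[fun_prop]
lemma measurable_gammaPDF (a r : ℝ) : Measurable (gammaPDF a r) :=
  (measurable_gammaPDFReal a r).ennreal_ofReal

@[fun_prop]
lemma measurable_betaPDF (a b : ℝ) : Measurable (betaPDF a b) :=
  (measurable_betaPDFReal a b).ennreal_ofReal

lemma map_add_div_add_prod_gammaMeasure {a b r : ℝ} (ha : 0 < a) (hb : 0 < b) (hr : 0 < r) :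
    ((gammaMeasure a r).prod (gammaMeasure b r)).map (fun p => (p.1 + p.2, p.1 / (p.1 + p.2))) =
      (gammaMeasure (a + b) r).prod (betaMeasure a b) := by
  refine Measure.ext_of_lintegral _ fun f hf => ?_
  rw [gammaMeasure, gammaMeasure, gammaMeasure, betaMeasure,
    prod_withDensity (by fun_prop) (by fun_prop), prod_withDensity (by fun_prop) (by fun_prop),
    lintegral_map hf (by fun_prop),
    lintegral_withDensity_eq_lintegral_mul _ (by fun_prop) (by fun_prop),
    lintegral_withDensity_eq_lintegral_mul _ (by fun_prop) hf]
  simp only [Pi.mul_apply]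
  rw [lintegral_prod _ (by fun_prop), lintegral_prod _ (by fun_prop),
    lintegral_lintegral_eq_lintegral_lintegral_mul_one_sub (F := fun p => gammaPDF a r p.1 *
      gammaPDF b r p.2 * f (p.1 + p.2, p.1 / (p.1 + p.2))) (by fun_prop)]
  refine lintegral_congr_ae ?_
  filter_upwards [Measure.ae_ne volume 0] with s hs
  refine lintegral_congr_ae ?_
  filter_upwards [Measure.ae_ne volume 0, Measure.ae_ne volume 1] with u hu₀ hu₁
  have hsum : s * u + s * (1 - u) = s := by ring
  rw [hsum, mul_div_cancel_left₀ u hs, ← mul_assoc, gammaPDF_mul_gammaPDF ha hb hr hs hu₀ hu₁]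

lemma gammaMeasure_conv_gammaMeasure {a b r : ℝ} (ha : 0 < a) (hb : 0 < b) (hr : 0 < r) :
    gammaMeasure a r ∗ gammaMeasure b r = gammaMeasure (a + b) r := by
  have := isProbabilityMeasureBeta ha hb
  have := isProbabilityMeasure_gammaMeasure (add_pos ha hb) hr
  have h := congrArg (Measure.map Prod.fst) (map_add_div_add_prod_gammaMeasure ha hb hr)
  rwa [Measure.map_map (by fun_prop) (by fun_prop), Measure.map_fst_prod, measure_univ,
    one_smul] at h

lemma betaMeasure_one_one : betaMeasure 1 1 = volume.restrict (Set.Icc 0 1) := by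
  have hone : beta 1 1 = 1 := by
    rw [beta, one_add_one_eq_two, Real.Gamma_one, Real.Gamma_two, one_mul, div_one]
  rw [betaMeasure, ← restrict_Ioo_eq_restrict_Icc, ← withDensity_indicator_one measurableSet_Ioo]
  congr 1 with x
  by_cases hx : 0 < x ∧ x < 1
  · simp [betaPDF_of_pos_lt_one hx.1 hx.2, hone, Set.indicator_of_mem (Set.mem_Ioo.mpr hx)]
  · rw [Set.indicator_of_notMem (mt Set.mem_Ioo.mp hx), betaPDF_eq, if_neg hx, ENNReal.ofReal_zero]

end GammaDistribution

section ChiSquare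

open scoped ENNReal NNReal

instance (k : ℕ) : IsProbabilityMeasure (chiSq k) :=
  Measure.isProbabilityMeasure_map (Measurable.aemeasurable (by fun_prop))

lemma lintegral_eq_two_mul_setLIntegral_Ioi {f : ℝ → ℝ≥0∞} (hf : Function.Even f) :
    ∫⁻ x, f x = 2 * ∫⁻ x in Set.Ioi 0, f x := by
  have hneg : ∫⁻ x in Set.Iio 0, f x = ∫⁻ x in Set.Ioi 0, f x := by
    have h := (Measure.measurePreserving_neg (volume : Measure ℝ)).setLIntegral_comp_preimage_emb
      (MeasurableEquiv.neg ℝ).measurableEmbedding f (Set.Ioi 0)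
    simpa [hf _] using h
  rw [← lintegral_add_compl f measurableSet_Ioi, Set.compl_Ioi, ← restrict_Iio_eq_restrict_Iic,
    hneg, two_mul]

lemma setLIntegral_Ioi_mul_comp_sq (f : ℝ → ℝ≥0∞) :
    ∫⁻ x in Set.Ioi 0, ENNReal.ofReal (2 * x) * f (x ^ 2) = ∫⁻ t in Set.Ioi 0, f t := by
  have himage : (fun x : ℝ => x ^ 2) '' Set.Ioi 0 = Set.Ioi 0 := by
    ext t
    refine ⟨?_, fun ht => ⟨√t, sqrt_pos.mpr ht, sq_sqrt ht.le⟩⟩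
    rintro ⟨x, hx, rfl⟩
    exact pow_pos (Set.mem_Ioi.mp hx) 2
  have hderiv : ∀ x ∈ Set.Ioi (0 : ℝ), HasDerivWithinAt (· ^ 2) (2 * x) (Set.Ioi 0) x :=
    fun x _ => by simpa using (hasDerivAt_pow 2 x).hasDerivWithinAt
  have hinj : Set.InjOn (fun x : ℝ => x ^ 2) (Set.Ioi 0) := fun x hx y hy h =>
    (pow_left_inj₀ hx.le hy.le two_ne_zero).mp h
  conv_rhs =>
    rw [← himage, lintegral_image_eq_lintegral_abs_deriv_mul measurableSet_Ioi hderiv hinj]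
  refine setLIntegral_congr_fun measurableSet_Ioi fun x (hx : 0 < x) => ?_
  simp only [abs_of_pos (mul_pos two_pos hx)]

lemma gaussianPDFReal_eq_mul_gammaPDFReal_sq {v : ℝ≥0} {x : ℝ} (hx : 0 < x) :
    gaussianPDFReal 0 v x = x * gammaPDFReal (1 / 2) (1 / (2 * v)) (x ^ 2) := by
  have hsqrt : (x ^ 2) ^ ((1 : ℝ) / 2 - 1) = x⁻¹ := by
    rw [rpow_sub (by positivity), ← sqrt_eq_rpow, sqrt_sq hx.le, rpow_one]
    field_simp
  have hconst : (√(2 * π * v))⁻¹ = (1 / (2 * v)) ^ ((1 : ℝ) / 2) / √π := by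
    rw [← sqrt_eq_rpow, ← sqrt_inv, ← sqrt_div' _ pi_pos.le]
    congr 1
    field_simp
  rw [gammaPDFReal, if_pos (by positivity), hsqrt, Real.Gamma_one_half_eq, gaussianPDFReal, hconst]
  field_simp
  ring_nf

lemma map_sq_gaussianReal {v : ℝ≥0} (hv : v ≠ 0) :
    (gaussianReal 0 v).map (· ^ 2) = gammaMeasure (1 / 2) (1 / (2 * v)) := by
  refine Measure.ext_of_lintegral _ fun f hf => ?_
  have hpos : ∫⁻ t, gammaPDF (1 / 2) (1 / (2 * v)) t * f t =
      ∫⁻ t in Set.Ioi 0, gammaPDF (1 / 2) (1 / (2 * v)) t * f t := by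
    rw [← lintegral_add_compl _ (measurableSet_Ioi (a := (0 : ℝ))), Set.compl_Ioi,
      ← restrict_Iio_eq_restrict_Iic, setLIntegral_eq_zero measurableSet_Iio fun t ht => by
        rw [gammaPDF_of_neg ht, zero_mul, Pi.zero_apply], add_zero]
  rw [gaussianReal_of_var_ne_zero 0 hv, gammaMeasure, lintegral_map hf (by fun_prop),
    lintegral_withDensity_eq_lintegral_mul _ (by fun_prop) (by fun_prop),
    lintegral_withDensity_eq_lintegral_mul _ (by fun_prop) hf,
    lintegral_eq_two_mul_setLIntegral_Ioi fun x => by simp [gaussianPDF, gaussianPDFReal]]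
  simp only [Pi.mul_apply]
  rw [hpos, ← setLIntegral_Ioi_mul_comp_sq fun t => gammaPDF _ _ t * f t,
    ← lintegral_const_mul _ (by fun_prop)]
  refine setLIntegral_congr_fun measurableSet_Ioi fun x (hx : 0 < x) => ?_
  simp only [gaussianPDF, gammaPDF]
  rw [gaussianPDFReal_eq_mul_gammaPDFReal_sq hx, ENNReal.ofReal_mul hx.le,
    ENNReal.ofReal_mul zero_le_two, ENNReal.ofReal_ofNat]
  ring

lemma chiSq_succ (k : ℕ) : chiSq (k + 1) = (gaussianReal 0 1).map (· ^ 2) ∗ chiSq k := by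
  have hsplit := (measurePreserving_piFinSuccAbove
    (fun _ => gaussianReal 0 1) (0 : Fin (k + 1))).map_eq
  rw [chiSq, chiSq, _root_.stdGaussian, _root_.stdGaussian, Measure.conv,
    Measure.map_prod_map _ _ (by fun_prop) (by fun_prop), ← hsplit,
    Measure.map_map (by fun_prop) (by fun_prop), Measure.map_map (by fun_prop) (by fun_prop)]
  congr 1 with z
  exact Fin.sum_univ_succ _

lemma chiSq_zero : chiSq 0 = Measure.dirac 0 := by
  simp [chiSq, _root_.stdGaussian]

lemma chiSq_succ_eq_gammaMeasure (k : ℕ) :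
    chiSq (k + 1) = gammaMeasure ((k + 1) / 2) (1 / 2) := by
  have hsq : (gaussianReal 0 1).map (· ^ 2) = gammaMeasure (1 / 2) (1 / 2) := by
    simpa using map_sq_gaussianReal one_ne_zero
  induction k with
  | zero =>
    have := isProbabilityMeasure_gammaMeasure (a := 1 / 2) (r := 1 / 2) (by simp) (by simp)
    rw [chiSq_succ, chiSq_zero, hsq, Measure.conv_dirac_zero, Nat.cast_zero, zero_add]
  | succ k ih =>
    rw [chiSq_succ, ih, hsq,
      gammaMeasure_conv_gammaMeasure (by positivity) (by positivity) (by positivity)]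
    push_cast
    ring_nf

lemma map_sum_sq_stdGaussian_fin_two_prod (k : ℕ) :
    (stdGaussian (Fin 2 × Fin k)).map
      (fun z => (∑ j, z (0, j) ^ 2, ∑ j, z (1, j) ^ 2)) = (chiSq k).prod (chiSq k) := by
  have hcurry : (stdGaussian (Fin 2 × Fin k)).map (MeasurableEquiv.curry (Fin 2) (Fin k) ℝ) =
      Measure.pi fun _ => stdGaussian (Fin k) := by
    have h := Measure.infinitePi_map_curry fun (_ : Fin 2) (_ : Fin k) => gaussianReal 0 1
    simpa only [Measure.infinitePi_eq_pi, _root_.stdGaussian] using h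
  have hsq : (Measure.pi fun _ : Fin 2 => stdGaussian (Fin k)).map
      (fun w i => ∑ j, w i j ^ 2) = Measure.pi fun _ => chiSq k := by
    have : SigmaFinite ((stdGaussian (Fin k)).map fun z => ∑ j, z j ^ 2) :=
      inferInstanceAs (SigmaFinite (chiSq k))
    exact Measure.pi_map_pi (f := fun _ (z : Fin k → ℝ) => ∑ j, z j ^ 2) fun _ =>
      Measurable.aemeasurable (by fun_prop)
  rw [← (measurePreserving_finTwoArrow (chiSq k)).map_eq, ← hsq, ← hcurry,
    Measure.map_map (by fun_prop) (by fun_prop), Measure.map_map (by fun_prop) (by fun_prop)]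
  rfl

end ChiSquare

section Uniform

lemma map_abs_two_mul_sub_one_volume_restrict_Icc :
    (volume.restrict (Set.Icc (0 : ℝ) 1)).map (fun t => |2 * t - 1|) =
      volume.restrict (Set.Icc 0 1) := by
  refine Measure.ext_of_Iic _ _ fun c => ?_
  have hpre : (fun t : ℝ => |2 * t - 1|) ⁻¹' Set.Iic c ∩ Set.Icc 0 1 =
      Set.Icc (max 0 ((1 - c) / 2)) (min 1 ((1 + c) / 2)) := by
    ext t
    simp only [Set.mem_inter_iff, Set.mem_preimage, Set.mem_Iic, Set.mem_Icc, abs_le, sup_le_iff,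
      le_inf_iff]
    constructor <;> intro h <;> refine ⟨⟨?_, ?_⟩, ?_, ?_⟩ <;> linarith [h.1.1, h.1.2, h.2.1, h.2.2]
  have hlen : min 1 ((1 + c) / 2) - max 0 ((1 - c) / 2) = min 1 c := by
    rcases le_total c 1 with hc | hc
    · rw [min_eq_right (by linarith), max_eq_right (by linarith), min_eq_right hc]
      ring
    · rw [min_eq_left (by linarith), max_eq_left (by linarith), min_eq_left hc, sub_zero]
  rw [Measure.map_apply (by fun_prop) measurableSet_Iic,
    Measure.restrict_apply (measurableSet_Iic.preimage (by fun_prop)), hpre, Real.volume_Icc, hlen,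
    Measure.restrict_apply measurableSet_Iic, Set.inter_comm, ← Set.Ici_inter_Iic, Set.inter_assoc,
    Set.Iic_inter_Iic, Set.Ici_inter_Iic, Real.volume_Icc, sub_zero, inf_comm]

lemma map_add_div_add_prod_chiSq_two :
    ((chiSq 2).prod (chiSq 2)).map (fun p => (p.1 + p.2, p.1 / (p.1 + p.2))) =
      (chiSq 4).prod (volume.restrict (Set.Icc 0 1)) := by
  have hchiSq_two : chiSq 2 = gammaMeasure 1 (1 / 2) := by
    simpa [one_add_one_eq_two] using chiSq_succ_eq_gammaMeasure 1
  have hchiSq_four : chiSq 4 = gammaMeasure (1 + 1) (1 / 2) := by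
    rw [chiSq_succ_eq_gammaMeasure 3]
    norm_num
  rw [hchiSq_two, hchiSq_four, ← betaMeasure_one_one,
    map_add_div_add_prod_gammaMeasure one_pos one_pos one_half_pos]

lemma map_sq_sub_div_prod_chiSq_two :
    ((chiSq 2).prod (chiSq 2)).map (fun p => (p.1 - p.2) ^ 2 / (4 * (p.1 + p.2))) =
      ((chiSq 4).prod (volume.restrict (Set.Icc 0 1))).map (fun p => 1 / 4 * p.1 * p.2 ^ 2) := by
  have hfold := map_abs_two_mul_sub_one_volume_restrict_Icc
  have hprod : (chiSq 4).prod (volume.restrict (Set.Icc (0 : ℝ) 1)) =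
      ((chiSq 4).prod (volume.restrict (Set.Icc 0 1))).map (Prod.map id fun t => |2 * t - 1|) := by
    rw [← Measure.map_prod_map _ _ (by fun_prop) (by fun_prop), hfold, Measure.map_id]
  rw [hprod, ← map_add_div_add_prod_chiSq_two, Measure.map_map (by fun_prop) (by fun_prop),
    Measure.map_map (by fun_prop) (by fun_prop)]
  congr 1 with ⟨x, y⟩
  simp only [Function.comp_apply, Prod.map_apply, id_eq, sq_abs]
  rcases eq_or_ne (x + y) 0 with h | h
  · simp [h]
  · field_simp
    ring

end Uniform

open scoped Kronecker in
/-- Let `Σ = Σ⁽¹⁾ ⊗ Σ⁽²⁾` be the Kronecker product of two positive definite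
`2×2` matrices and let `f(x₁,x₂,x₃,x₄) = x₁x₄ − x₂x₃` (the tetrad), where the coordinates
`x₁, x₂, x₃, x₄` are indexed by `(0,0), (0,1), (1,0), (1,1)` in the Kronecker ordering.
Then `W_{f,Σ}` has the same distribution as `(1/4)·R²·U²`, with `R² ~ χ²₄` and
`U ~ Uniform[0,1]` independent. -/
theorem tetrad_waldRV (S₁ S₂ : Matrix (Fin 2) (Fin 2) ℝ)
    (hS₁ : S₁.PosDef) (hS₂ : S₂.PosDef)
    (μ : Measure ((Fin 2 × Fin 2) → ℝ)) (hμ : IsCenteredGaussian μ (S₁ ⊗ₖ S₂)) :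
    μ.map (waldRV (X (0, 0) * X (1, 1) - X (0, 1) * X (1, 0)) (S₁ ⊗ₖ S₂)) =
      ((chiSq 4).prod (volume.restrict (Set.Icc (0 : ℝ) 1))).map
        (fun p => 1 / 4 * p.1 * p.2 ^ 2) := by
  have hdet : X (0, 0) * X (1, 1) - X (0, 1) * X (1, 0) =
      (mvPolynomialX (Fin 2) (Fin 2) ℝ).det := by
    simp only [det_fin_two, mvPolynomialX_apply]
  rw [hdet, hμ.map_waldRV_det hS₁ hS₂, map_waldRV_det_eq_map_waldRV_splitForm,
    ← map_sq_sub_div_prod_chiSq_two, ← map_sum_sq_stdGaussian_fin_two_prod,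
    Measure.map_map (by fun_prop) (by fun_prop)]
  exact congrArg (Measure.map · _) (funext waldRV_splitForm)
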